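/- Let Ω be a bounded open convex set in ℝ² containing the origin in its interior, satisfying sup_{θ∈S¹} sup_{δ>0} δ^{-1/2} μ(θ,δ) < ∞. Let 10 ≤ r ≤ R < ∞ and R^{1/2} ≤ h ≤ R. Let J be a closed line segment whose endpoints are in ℤ², let 𝕁 = J ∩ ℤ², and assume the ninefold concentric parallel dilate 9J is contained in the annulus 𝒜(r,h) = {x ∈ ℝ² : r ≤ ρ*(x) ≤ r + 1/h} and card(𝕁) ≥ 10. Let d be the (constant) distance between consecutive lattice points on J and set 𝒯 = R^{3/4} d^{1/2} h^{−1/2} r^{−1/4}. Then there is a constant C_Ω such that: √(Rr) Σ_{ℓ∈𝕁} μ(ℓ/|ℓ|, 1/(R|ℓ|)) ≤ C_Ω (Rr/(h²d²))^{1/4} if card(𝕁) ≤ 𝒯, and √(Rr) Σ_{ℓ∈𝕁} μ(ℓ/|ℓ|, 1/(R|ℓ|)) ≤ C_Ω (r·card(𝕁)/(h d²))^{1/3} if card(𝕁) ≥ 𝒯. -/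

import Mathlib

/-!
A point of the cap with normal `ξ` and height `δ` is a `δ`-approximate subgradient of `ρ*` at `ξ`,
so two of them differ in the direction `v` by at most the second difference of `ρ*` at `ξ` with
step `v`, up to `2δ`, and in the direction `ξ` by at most `δ`. If `ξ` and `v` are transversal, these
two bounds control the diameter of the cap.

Let `ξ` run through a progression `p + j v`, `0 ≤ j ≤ n`, in the annulus. The second differences
with step `m v` telescope over `j` into increments of the convex function `t ↦ ρ* (p + t v)`, whose
oscillation on `[-n, 2n]` is at most `1/h`. With `d = ‖v‖` the cap diameters add up to
`O((m / (n h) + n / (m R)) / d)`, and the choice `m ≈ n √(h/R)` leads to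
`√(R r) Σ μ = O(A + A² / n)`, where `A = (R r / (h² d²))^{1/4}`. This settles the case in which `n`
exceeds a suitable multiple of `A`; since `A h d ≥ 1`, the progression is then also so long that
the annulus forces transversality. For smaller `n` the curvature hypothesis makes every term
`√(R r) μ` bounded, and the sum is `O(n) = O(A)`. Finally `A ≤ (r N / (h d²))^{1/3}` exactly when
`N ≥ 𝒯`.
-/

open MeasureTheory Set
open scoped Pointwise RealInnerProductSpace NNReal ENNReal Classical

noncomputable section

abbrev E2 := EuclideanSpace ℝ (Fin 2)

/-- The embedding of an integer vector into the Euclidean plane. -/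
def ek (k : Fin 2 → ℤ) : E2 := (WithLp.equiv 2 (Fin 2 → ℝ)).symm fun i => (k i : ℝ)

/-- Number of lattice points in a set. -/
def latticeCount (S : Set E2) : ℕ := Nat.card {k : Fin 2 → ℤ | ek k ∈ S}

/-- The lattice rest `E_Ω(t) = card(tΩ ∩ ℤ²) − t²·area(Ω)`. -/
def latticeRest (Ω : Set E2) (t : ℝ) : ℝ :=
  (latticeCount (t • Ω) : ℝ) - t ^ 2 * (volume Ω).toReal

/-- The mean square discrepancy `𝒢_Ω(R,h) = ((1/h)∫_R^{R+h} |E_Ω(t)|² dt)^{1/2}`. -/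
def meanSquare (Ω : Set E2) (R h : ℝ) : ℝ :=
  Real.sqrt ((1 / h) * ∫ t in R..(R + h), (latticeRest Ω t) ^ 2)

/-- The support function `ρ*(ξ) = sup {⟨x,ξ⟩ : x ∈ Ω}`. -/
def suppFn (Ω : Set E2) (ξ : E2) : ℝ := sSup ((fun x => ⟪x, ξ⟫) '' Ω)

/-- `μ(θ,δ)`, the diameter of the cap `𝒞(θ,δ) = {x ∈ ∂Ω : ⟨x,θ⟩ ≥ ρ*(θ) − δ}`. -/
def capDiam (Ω : Set E2) (θ : E2) (δ : ℝ) : ℝ :=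
  Metric.diam {x ∈ frontier Ω | suppFn Ω θ - δ ≤ ⟪x, θ⟫}

/-- Curvature bounded below in the generalized sense:
`sup_{θ∈S¹} sup_{δ>0} δ^{-1/2} μ(θ,δ) < ∞`. -/
def CurvBddBelow (Ω : Set E2) : Prop :=
  ∃ K : ℝ, ∀ θ : E2, ‖θ‖ = 1 → ∀ δ : ℝ, 0 < δ → capDiam Ω θ δ ≤ K * Real.sqrt δ

section SupportFunction

variable {Ω : Set E2}

lemma suppFn_smul (Ω : Set E2) {c : ℝ} (hc : 0 ≤ c) (ξ : E2) :
    suppFn Ω (c • ξ) = c * suppFn Ω ξ := by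
  rw [suppFn, suppFn, ← smul_eq_mul, ← Real.sSup_smul_of_nonneg hc, ← image_smul, image_image]
  simp only [real_inner_smul_right, smul_eq_mul]

lemma inner_le_suppFn (hbdd : Bornology.IsBounded Ω) {y : E2} (hy : y ∈ closure Ω) (ξ : E2) :
    ⟪y, ξ⟫ ≤ suppFn Ω ξ := by
  obtain ⟨M, hM⟩ := hbdd.exists_norm_le
  have hbddAbove : BddAbove ((fun x => ⟪x, ξ⟫) '' Ω) :=
    ⟨M * ‖ξ‖, forall_mem_image.2 fun x hx =>
      (real_inner_le_norm x ξ).trans (by gcongr; exact hM x hx)⟩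
  have hclosed : IsClosed {x : E2 | ⟪x, ξ⟫ ≤ suppFn Ω ξ} :=
    isClosed_le (by fun_prop) continuous_const
  exact closure_minimal (fun x hx => le_csSup hbddAbove (mem_image_of_mem _ hx)) hclosed hy

lemma suppFn_le (hne : Ω.Nonempty) {ξ : E2} {c : ℝ} (h : ∀ x ∈ Ω, ⟪x, ξ⟫ ≤ c) : suppFn Ω ξ ≤ c :=
  csSup_le (hne.image _) (forall_mem_image.2 h)

lemma convexOn_suppFn (hbdd : Bornology.IsBounded Ω) (hne : Ω.Nonempty) :
    ConvexOn ℝ univ (suppFn Ω) := by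
  refine ⟨convex_univ, fun ξ _ η _ a b ha hb _ => suppFn_le hne fun x hx => ?_⟩
  have hξ := inner_le_suppFn hbdd (subset_closure hx) ξ
  have hη := inner_le_suppFn hbdd (subset_closure hx) η
  rw [inner_add_right, real_inner_smul_right, real_inner_smul_right, smul_eq_mul, smul_eq_mul]
  gcongr

lemma suppFn_le_mul_norm (hne : Ω.Nonempty) {M : ℝ} (hout : Ω ⊆ Metric.closedBall 0 M) (ξ : E2) :
    suppFn Ω ξ ≤ M * ‖ξ‖ :=
  suppFn_le hne fun x hx =>
    (real_inner_le_norm x ξ).trans (by gcongr; exact mem_closedBall_zero_iff.1 (hout hx))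

lemma mul_norm_le_suppFn (hbdd : Bornology.IsBounded Ω) {ε : ℝ} (hε : 0 ≤ ε)
    (hin : Metric.closedBall 0 ε ⊆ Ω) (ξ : E2) : ε * ‖ξ‖ ≤ suppFn Ω ξ := by
  rcases eq_or_ne ξ 0 with rfl | hξ
  · simpa using inner_le_suppFn hbdd (subset_closure (hin (Metric.mem_closedBall_self hε))) 0
  have hξ' : ‖ξ‖ ≠ 0 := norm_ne_zero_iff.2 hξ
  have hmem : (ε * ‖ξ‖⁻¹) • ξ ∈ Ω := hin <| by
    rw [mem_closedBall_zero_iff, norm_smul, norm_mul, norm_inv, norm_norm, mul_assoc,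
      inv_mul_cancel₀ hξ', mul_one, Real.norm_of_nonneg hε]
  calc ε * ‖ξ‖ = ⟪(ε * ‖ξ‖⁻¹) • ξ, ξ⟫ := by
        rw [real_inner_smul_left, real_inner_self_eq_norm_sq]; field_simp
    _ ≤ suppFn Ω ξ := inner_le_suppFn hbdd (subset_closure hmem) ξ

/-- The annulus `𝒜(r,h) = {x : r ≤ ρ*(x) ≤ r + 1/h}`. -/
def supportAnnulus (Ω : Set E2) (r h : ℝ) : Set E2 :=
  {x | r ≤ suppFn Ω x ∧ suppFn Ω x ≤ r + 1 / h}

end SupportFunction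

section SecondDifference

/-- The symmetric second difference of `f` at `x` with step `w`. -/
def secondDiff {E : Type*} [AddGroup E] (f : E → ℝ) (x w : E) : ℝ := f (x + w) + f (x - w) - 2 * f x

variable {E : Type*} [AddCommGroup E] [Module ℝ E]

lemma secondDiff_nonneg {f : E → ℝ} (hf : ConvexOn ℝ univ f) (x w : E) : 0 ≤ secondDiff f x w := by
  have h := hf.2 (mem_univ (x + w)) (mem_univ (x - w)) (one_half_pos (α := ℝ)).le
    one_half_pos.le (add_halves 1)
  rw [show (1 / 2 : ℝ) • (x + w) + (1 / 2 : ℝ) • (x - w) = x by module, smul_eq_mul,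
    smul_eq_mul] at h
  unfold secondDiff
  linarith

lemma sub_lineMap_le_of_convexOn {s : Set E} {f : E → ℝ} (hf : ConvexOn ℝ s f) {x y : E}
    (hx : x ∈ s) (hy : y ∈ s) {c : ℝ} (hc : c ∈ Icc (0 : ℝ) 1) :
    f (AffineMap.lineMap x y c) - f x ≤ c * (f y - f x) := by
  have h := hf.2 hx hy (sub_nonneg.2 hc.2) hc.1 (sub_add_cancel 1 c)
  rw [AffineMap.lineMap_apply_module]
  simp only [smul_eq_mul] at h
  linarith

lemma sum_range_shift_sub {G : Type*} [AddCommGroup G] (a : ℕ → G) (N m : ℕ) :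
    ∑ j ∈ Finset.range N, (a (j + m) - a j) = ∑ i ∈ Finset.range m, (a (N + i) - a i) := by
  have h := Finset.sum_range_add a N m
  rw [add_comm N m, Finset.sum_range_add] at h
  simp only [Finset.sum_sub_distrib, add_comm _ m]
  rw [sub_eq_sub_iff_add_eq_add, add_comm, h, add_comm]

lemma sum_secondDiff (f : ℝ → ℝ) (N m : ℕ) :
    ∑ j ∈ Finset.range N, secondDiff f j m =
      ∑ i ∈ Finset.range m, ((f (N + i) - f (N + i - m)) + (f (i - m) - f i)) := by
  convert sum_range_shift_sub (fun k : ℕ => f k - f (k - m)) N m using 2 with j _ i _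
  · push_cast
    rw [secondDiff, add_sub_cancel_right]
    ring
  · push_cast
    ring

lemma sum_secondDiff_le {n m : ℕ} (hn : 0 < n) (hmn : m ≤ n) {f : ℝ → ℝ}
    (hf : ConvexOn ℝ (Icc (-n : ℝ) (2 * n)) f) {r q : ℝ}
    (hosc : MapsTo f (Icc (-n : ℝ) (2 * n)) (Icc r (r + q))) :
    ∑ j ∈ Finset.range (n + 1), secondDiff f j m ≤ 2 * q * m ^ 2 / n := by
  have hn0 : (0 : ℝ) < n := by exact_mod_cast hn
  have hmn' : (m : ℝ) ≤ n := by exact_mod_cast hmn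
  have hc : (m / n : ℝ) ∈ Icc (0 : ℝ) 1 := ⟨by positivity, (div_le_one hn0).2 hmn'⟩
  have increment {x y : ℝ} (hx : x ∈ Icc (-n : ℝ) (2 * n)) (hy : y ∈ Icc (-n : ℝ) (2 * n)) :
      f (AffineMap.lineMap x y (m / n : ℝ)) - f x ≤ m / n * q :=
    (sub_lineMap_le_of_convexOn hf hx hy hc).trans <| by
      gcongr
      linarith [(hosc hx).1, (hosc hy).2]
  rw [sum_secondDiff]
  refine (Finset.sum_le_card_nsmul _ _ (2 * (m / n * q)) fun i hi => ?_).trans_eq ?_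
  · have : (0 : ℝ) ≤ i := i.cast_nonneg
    have him : (i : ℝ) + 1 ≤ m := by exact_mod_cast Finset.mem_range.1 hi
    have hright := increment (x := n + 1 + i - m) (y := n + 1 + i - m + n)
      ⟨by linarith, by linarith⟩ ⟨by linarith, by linarith⟩
    have hleft := increment (x := i) (y := i - n) ⟨by linarith, by linarith⟩
      ⟨by linarith, by linarith⟩
    rw [show AffineMap.lineMap (n + 1 + i - m : ℝ) (n + 1 + i - m + n) (m / n : ℝ) = n + 1 + i by
      rw [AffineMap.lineMap_apply_ring']; field_simp; ring] at hright
    rw [show AffineMap.lineMap (i : ℝ) (i - n) (m / n : ℝ) = i - m by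
      rw [AffineMap.lineMap_apply_ring']; field_simp; ring] at hleft
    push_cast
    linarith
  · rw [Finset.card_range, nsmul_eq_mul]
    ring

end SecondDifference

section Caps

variable {Ω : Set E2} {ξ y z : E2} {δ : ℝ}

/-- The cap `𝒞(θ,δ)`, of diameter `capDiam Ω θ δ`, for a normal `θ` of any length. -/
def supportCap (Ω : Set E2) (θ : E2) (δ : ℝ) : Set E2 :=
  {x ∈ frontier Ω | suppFn Ω θ - δ ≤ ⟪x, θ⟫}

lemma capDiam_smul (Ω : Set E2) {c : ℝ} (hc : 0 < c) (ξ : E2) (δ : ℝ) :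
    capDiam Ω (c • ξ) (c * δ) = capDiam Ω ξ δ := by
  simp only [capDiam, suppFn_smul Ω hc.le, real_inner_smul_right, ← mul_sub,
    mul_le_mul_iff_right₀ hc]

lemma capDiam_normalize (Ω : Set E2) (hξ : ξ ≠ 0) (R : ℝ) :
    capDiam Ω (‖ξ‖⁻¹ • ξ) (1 / (R * ‖ξ‖)) = capDiam Ω ξ (1 / R) := by
  rw [← capDiam_smul Ω (inv_pos.2 (norm_pos_iff.2 hξ)) ξ (1 / R), inv_mul_eq_div, div_div]

lemma inner_le_of_mem_supportCap (hbdd : Bornology.IsBounded Ω) (hy : y ∈ supportCap Ω ξ δ)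
    (w : E2) : ⟪y, w⟫ ≤ suppFn Ω (ξ + w) - suppFn Ω ξ + δ := by
  have h := inner_le_suppFn hbdd (frontier_subset_closure hy.1) (ξ + w)
  rw [inner_add_right] at h
  linarith [hy.2]

lemma neg_inner_le_of_mem_supportCap (hbdd : Bornology.IsBounded Ω) (hy : y ∈ supportCap Ω ξ δ)
    (w : E2) : -⟪y, w⟫ ≤ suppFn Ω (ξ - w) - suppFn Ω ξ + δ := by
  rw [← inner_neg_right, sub_eq_add_neg ξ w]
  exact inner_le_of_mem_supportCap hbdd hy (-w)

lemma abs_inner_le_of_mem_supportCap (hbdd : Bornology.IsBounded Ω) (hy : y ∈ supportCap Ω ξ δ)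
    {w : E2} {q : ℝ} (hadd : suppFn Ω (ξ + w) ≤ suppFn Ω ξ + q)
    (hsub : suppFn Ω (ξ - w) ≤ suppFn Ω ξ + q) : |⟪y, w⟫| ≤ q + δ := by
  rw [abs_le']
  constructor
  · linarith [inner_le_of_mem_supportCap hbdd hy w]
  · linarith [neg_inner_le_of_mem_supportCap hbdd hy w]

lemma abs_inner_sub_le_secondDiff (hbdd : Bornology.IsBounded Ω) (hy : y ∈ supportCap Ω ξ δ)
    (hz : z ∈ supportCap Ω ξ δ) (w : E2) :
    |⟪y - z, w⟫| ≤ secondDiff (suppFn Ω) ξ w + 2 * δ := by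
  have hy₁ := inner_le_of_mem_supportCap hbdd hy w
  have hy₂ := neg_inner_le_of_mem_supportCap hbdd hy w
  have hz₁ := inner_le_of_mem_supportCap hbdd hz w
  have hz₂ := neg_inner_le_of_mem_supportCap hbdd hz w
  rw [inner_sub_left, secondDiff, abs_le']
  constructor <;> linarith

lemma abs_inner_sub_normal_le (hbdd : Bornology.IsBounded Ω) (hy : y ∈ supportCap Ω ξ δ)
    (hz : z ∈ supportCap Ω ξ δ) : |⟪y - z, ξ⟫| ≤ δ := by
  have hy' := inner_le_suppFn hbdd (frontier_subset_closure hy.1) ξ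
  have hz' := inner_le_suppFn hbdd (frontier_subset_closure hz.1) ξ
  rw [inner_sub_left, abs_le']
  constructor <;> linarith [hy.2, hz.2]

lemma CurvBddBelow.exists_capDiam_le (hcurv : CurvBddBelow Ω) :
    ∃ K, 0 ≤ K ∧ ∀ ξ ≠ 0, ∀ δ > 0, capDiam Ω ξ δ ≤ K * √(δ / ‖ξ‖) := by
  obtain ⟨K, hK⟩ := hcurv
  refine ⟨|K|, abs_nonneg K, fun ξ hξ δ hδ => ?_⟩
  have hξ' : 0 < ‖ξ‖ := norm_pos_iff.2 hξ
  calc capDiam Ω ξ δ = capDiam Ω (‖ξ‖⁻¹ • ξ) (‖ξ‖⁻¹ * δ) :=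
        (capDiam_smul Ω (inv_pos.2 hξ') ξ δ).symm
    _ ≤ K * √(‖ξ‖⁻¹ * δ) := hK _ (by simpa using norm_smul_inv_norm (𝕜 := ℝ) hξ) _ (by positivity)
    _ ≤ |K| * √(δ / ‖ξ‖) := by
        rw [inv_mul_eq_div]
        gcongr
        exact le_abs_self K

end Caps

section PlaneCaps

-- In the plane `⟪y, ξ⟫ • v - ⟪y, v⟫ • ξ` is `det (ξ, v)` times `y` turned by a right angle.
lemma norm_mul_norm_inner_smul_sub_comm (ξ v u y : E2) :
    ‖u‖ * ‖⟪y, ξ⟫ • v - ⟪y, v⟫ • ξ‖ = ‖y‖ * ‖⟪u, ξ⟫ • v - ⟪u, v⟫ • ξ‖ := by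
  rw [← sq_eq_sq₀ (by positivity) (by positivity)]
  simp only [mul_pow, EuclideanSpace.norm_sq_eq, Fin.sum_univ_two, Real.norm_eq_abs, sq_abs,
    PiLp.sub_apply, PiLp.smul_apply, smul_eq_mul, PiLp.inner_apply, RCLike.inner_apply,
    conj_trivial]
  ring

lemma norm_mul_le_of_transversal {ξ v y : E2} {a : ℝ}
    (ha : a ≤ |⟪y, ξ⟫| * ‖v‖ - |⟪y, v⟫| * ‖ξ‖) (u : E2) :
    ‖u‖ * a ≤ ‖y‖ * (|⟪u, ξ⟫| * ‖v‖ + |⟪u, v⟫| * ‖ξ‖) := by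
  have hlower := norm_sub_norm_le (⟪y, ξ⟫ • v) (⟪y, v⟫ • ξ)
  have hupper := norm_sub_le (⟪u, ξ⟫ • v) (⟪u, v⟫ • ξ)
  simp only [norm_smul, Real.norm_eq_abs] at hlower hupper
  calc ‖u‖ * a ≤ ‖u‖ * ‖⟪y, ξ⟫ • v - ⟪y, v⟫ • ξ‖ := by gcongr; exact ha.trans hlower
    _ = ‖y‖ * ‖⟪u, ξ⟫ • v - ⟪u, v⟫ • ξ‖ := norm_mul_norm_inner_smul_sub_comm ξ v u y
    _ ≤ ‖y‖ * (|⟪u, ξ⟫| * ‖v‖ + |⟪u, v⟫| * ‖ξ‖) := by gcongr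

variable {Ω : Set E2} {ε M r δ : ℝ}

lemma abs_inner_mul_norm_le_of_mem_supportCap (hbdd : Bornology.IsBounded Ω) (hε : 0 < ε)
    (hin : Metric.closedBall 0 ε ⊆ Ω) {ξ v y : E2} (hy : y ∈ supportCap Ω ξ δ)
    (hξ : suppFn Ω ξ ≤ 2 * r) {t q : ℝ} (ht : 0 < t)
    (hadd : suppFn Ω (ξ + t • v) ≤ suppFn Ω ξ + q) (hsub : suppFn Ω (ξ - t • v) ≤ suppFn Ω ξ + q)
    (hlong : 8 * (q + δ) ≤ ε * (t * ‖v‖)) : |⟪y, v⟫| * ‖ξ‖ ≤ r / 4 * ‖v‖ := by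
  have hξε : ε * ‖ξ‖ ≤ 2 * r := (mul_norm_le_suppFn hbdd hε.le hin ξ).trans hξ
  have hinner : t * |⟪y, v⟫| ≤ q + δ := by
    have h := abs_inner_le_of_mem_supportCap hbdd hy hadd hsub
    rwa [real_inner_smul_right, abs_mul, abs_of_pos ht] at h
  refine le_of_mul_le_mul_left ?_ (mul_pos hε ht)
  calc ε * t * (|⟪y, v⟫| * ‖ξ‖) = t * |⟪y, v⟫| * (ε * ‖ξ‖) := by ring
    _ ≤ ε * (t * ‖v‖) / 8 * (2 * r) := by
        gcongr
        linarith
    _ = ε * t * (r / 4 * ‖v‖) := by ring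

lemma mul_norm_le_of_suppFn_le (hbdd : Bornology.IsBounded Ω) (hε : 0 ≤ ε)
    (hin : Metric.closedBall 0 ε ⊆ Ω) {ξ w : E2} (hξ : suppFn Ω ξ ≤ 2 * r)
    (hξw : suppFn Ω (ξ + w) ≤ 2 * r) : ε * ‖w‖ ≤ 4 * r := by
  have h₁ := mul_norm_le_suppFn hbdd hε hin ξ
  have h₂ := mul_norm_le_suppFn hbdd hε hin (ξ + w)
  have h₃ : ε * ‖w‖ ≤ ε * ‖ξ + w‖ + ε * ‖ξ‖ := by
    rw [← mul_add]
    gcongr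
    simpa using norm_sub_le (ξ + w) ξ
  linarith

lemma capDiam_le_secondDiff (hε : 0 < ε) (hin : Metric.closedBall 0 ε ⊆ Ω)
    (hout : Ω ⊆ Metric.closedBall 0 M) (hr : 0 < r) (hδ : 0 ≤ δ) (hδr : 2 * δ ≤ r) {ξ w : E2}
    (hw : w ≠ 0) (hξ : suppFn Ω ξ ∈ Icc r (2 * r)) (hξw : suppFn Ω (ξ + w) ≤ 2 * r)
    (htrans : ∀ y ∈ supportCap Ω ξ δ, |⟪y, w⟫| * ‖ξ‖ ≤ r / 4 * ‖w‖) :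
    capDiam Ω ξ δ ≤ 16 * M / ε * ((secondDiff (suppFn Ω) ξ w + 2 * δ) / ‖w‖) := by
  have hbdd : Bornology.IsBounded Ω := Metric.isBounded_closedBall.subset hout
  have h0 : (0 : E2) ∈ Ω := hin (Metric.mem_closedBall_self hε.le)
  have hM : 0 ≤ M := by simpa using hout h0
  have : 0 < ‖w‖ := norm_pos_iff.2 hw
  set D := secondDiff (suppFn Ω) ξ w + 2 * δ
  have hδD : 2 * δ ≤ D :=
    le_add_of_nonneg_left (secondDiff_nonneg (convexOn_suppFn hbdd ⟨0, h0⟩) ξ w)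
  have hD : 0 ≤ D := by linarith
  have hξε : ‖ξ‖ ≤ 2 * r / ε :=
    (le_div_iff₀' hε).2 ((mul_norm_le_suppFn hbdd hε.le hin ξ).trans hξ.2)
  have hwε : ‖w‖ ≤ 4 * r / ε :=
    (le_div_iff₀' hε).2 (mul_norm_le_of_suppFn_le hbdd hε.le hin hξ.2 hξw)
  refine Metric.diam_le_of_forall_dist_le (by positivity) fun y hy z hz => ?_
  have hyM : ‖y‖ ≤ M := mem_closedBall_zero_iff.1 <|
    closure_minimal hout Metric.isClosed_closedBall (frontier_subset_closure hy.1)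
  have hyξ : r / 2 ≤ |⟪y, ξ⟫| := (by linarith [hξ.1, hy.2] : r / 2 ≤ ⟪y, ξ⟫).trans (le_abs_self _)
  have htransversal : r / 4 * ‖w‖ ≤ |⟪y, ξ⟫| * ‖w‖ - |⟪y, w⟫| * ‖ξ‖ := by
    have h : r / 2 * ‖w‖ ≤ |⟪y, ξ⟫| * ‖w‖ := by gcongr
    linarith [htrans y hy]
  have hdist : dist y z * (r / 4 * ‖w‖) ≤ 16 * M / ε * (D / ‖w‖) * (r / 4 * ‖w‖) := by
    rw [dist_eq_norm]
    calc ‖y - z‖ * (r / 4 * ‖w‖) ≤ ‖y‖ * (|⟪y - z, ξ⟫| * ‖w‖ + |⟪y - z, w⟫| * ‖ξ‖) :=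
          norm_mul_le_of_transversal htransversal (y - z)
      _ ≤ M * (D / 2 * (4 * r / ε) + D * (2 * r / ε)) := by
          gcongr
          · linarith [abs_inner_sub_normal_le hbdd hy hz]
          · exact abs_inner_sub_le_secondDiff hbdd hy hz w
      _ = 16 * M / ε * (D / ‖w‖) * (r / 4 * ‖w‖) := by
          field_simp
          ring
  exact le_of_mul_le_mul_right hdist (by positivity)

end PlaneCaps

section Progressions

variable {Ω : Set E2} {ε M r q δ : ℝ} {p v : E2} {n : ℕ}

lemma convexOn_suppFn_line (hbdd : Bornology.IsBounded Ω) (hne : Ω.Nonempty) (p v : E2) :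
    ConvexOn ℝ univ fun t : ℝ => suppFn Ω (p + t • v) := by
  have h := (convexOn_suppFn hbdd hne).comp_affineMap (AffineMap.lineMap p (p + v))
  simpa only [preimage_univ, Function.comp_def, AffineMap.lineMap_apply, vsub_eq_sub,
    add_sub_cancel_left, vadd_eq_add, add_comm] using h

lemma capDiam_le_secondDiff_line (hε : 0 < ε) (hin : Metric.closedBall 0 ε ⊆ Ω)
    (hout : Ω ⊆ Metric.closedBall 0 M) (hr : 0 < r) (hqr : q ≤ r) (hδ : 0 ≤ δ) (hδr : 2 * δ ≤ r)
    (hv : v ≠ 0)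
    (hline : MapsTo (fun t : ℝ => suppFn Ω (p + t • v)) (Icc (-n : ℝ) (2 * n))
      (Icc r (r + q)))
    (hlong : 8 * (q + δ) ≤ ε * (n * ‖v‖)) {s m : ℝ} (hs : s ∈ Icc (0 : ℝ) n)
    (hm : m ∈ Ioc (0 : ℝ) n) :
    capDiam Ω (p + s • v) δ ≤
      16 * M / ε * ((secondDiff (fun t : ℝ => suppFn Ω (p + t • v)) s m + 2 * δ) / (m * ‖v‖)) := by
  have hbdd : Bornology.IsBounded Ω := Metric.isBounded_closedBall.subset hout
  have hadd (t : ℝ) : p + s • v + t • v = p + (s + t) • v := by module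
  have hsub (t : ℝ) : p + s • v - t • v = p + (s - t) • v := by module
  obtain ⟨hs0, hsn⟩ := hs
  obtain ⟨hm0, hmn⟩ := hm
  have hbase := hline (x := s) ⟨by linarith, by linarith⟩
  have hforward := (hline (x := s + n) ⟨by linarith, by linarith⟩).2
  have hbackward := (hline (x := s - n) ⟨by linarith, by linarith⟩).2
  have hstep := (hline (x := s + m) ⟨by linarith, by linarith⟩).2
  beta_reduce at hbase hforward hbackward hstep
  have htrans : ∀ y ∈ supportCap Ω (p + s • v) δ,
      |⟪y, m • v⟫| * ‖p + s • v‖ ≤ r / 4 * ‖m • v‖ := by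
    intro y hy
    have h := abs_inner_mul_norm_le_of_mem_supportCap (r := r) hbdd hε hin hy
      (by linarith [hbase.2]) (hm0.trans_le hmn) (by rw [hadd]; linarith [hbase.1])
      (by rw [hsub]; linarith [hbase.1]) hlong
    rw [real_inner_smul_right, norm_smul, abs_mul, Real.norm_eq_abs, mul_assoc,
      mul_left_comm (r / 4)]
    gcongr
  have h := capDiam_le_secondDiff hε hin hout hr hδ hδr (smul_ne_zero hm0.ne' hv)
    ⟨hbase.1, by linarith [hbase.2]⟩ (by rw [hadd]; linarith) htrans
  simpa only [secondDiff, hadd, hsub, norm_smul, Real.norm_of_nonneg hm0.le] using h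

lemma sum_capDiam_le_of_long (hε : 0 < ε) (hin : Metric.closedBall 0 ε ⊆ Ω)
    (hout : Ω ⊆ Metric.closedBall 0 M) (hr : 0 < r) (hqr : q ≤ r) (hδ : 0 ≤ δ) (hδr : 2 * δ ≤ r)
    (hv : v ≠ 0)
    (hline : MapsTo (fun t : ℝ => suppFn Ω (p + t • v)) (Icc (-n : ℝ) (2 * n))
      (Icc r (r + q)))
    (hlong : 8 * (q + δ) ≤ ε * (n * ‖v‖)) {m : ℕ} (hm : 0 < m) (hmn : m ≤ n) :
    ∑ j ∈ Finset.range (n + 1), capDiam Ω (p + (j : ℝ) • v) δ ≤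
      16 * M / ε * ((2 * q * m ^ 2 / n + 2 * (n + 1) * δ) / (m * ‖v‖)) := by
  have hbdd : Bornology.IsBounded Ω := Metric.isBounded_closedBall.subset hout
  have h0 : (0 : E2) ∈ Ω := hin (Metric.mem_closedBall_self hε.le)
  have hM : 0 ≤ M := by simpa using hout h0
  set f : ℝ → ℝ := fun t => suppFn Ω (p + t • v)
  have hcap : ∀ j ∈ Finset.range (n + 1), capDiam Ω (p + (j : ℝ) • v) δ ≤
      16 * M / ε * ((secondDiff f j m + 2 * δ) / (m * ‖v‖)) := fun j hj =>
    capDiam_le_secondDiff_line hε hin hout hr hqr hδ hδr hv hline hlong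
      ⟨j.cast_nonneg, by exact_mod_cast Finset.mem_range_succ_iff.1 hj⟩
      ⟨by exact_mod_cast hm, by exact_mod_cast hmn⟩
  calc ∑ j ∈ Finset.range (n + 1), capDiam Ω (p + (j : ℝ) • v) δ
      ≤ ∑ j ∈ Finset.range (n + 1), 16 * M / ε * ((secondDiff f j m + 2 * δ) / (m * ‖v‖)) :=
        Finset.sum_le_sum hcap
    _ = 16 * M / ε *
          ((∑ j ∈ Finset.range (n + 1), secondDiff f j m + 2 * (n + 1) * δ) / (m * ‖v‖)) := by
        rw [← Finset.mul_sum, ← Finset.sum_div, Finset.sum_add_distrib, Finset.sum_const,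
          Finset.card_range, nsmul_eq_mul]
        push_cast
        ring
    _ ≤ 16 * M / ε * ((2 * q * m ^ 2 / n + 2 * (n + 1) * δ) / (m * ‖v‖)) := by
        gcongr
        exact sum_secondDiff_le (hm.trans_le hmn) hmn
          ((convexOn_suppFn_line hbdd ⟨0, h0⟩ p v).subset (subset_univ _) (convex_Icc _ _)) hline

lemma exists_nat_balance (hδ : 0 < δ) (hδq : δ ≤ q) (hn : 0 < n) :
    ∃ m : ℕ, 0 < m ∧ m ≤ n ∧
      (2 * q * m ^ 2 / n + 2 * (n + 1) * δ) / m ≤ 6 * √(q * δ) + 2 * q / n := by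
  have hq : 0 < q := hδ.trans_le hδq
  have hn' : (1 : ℝ) ≤ n := by exact_mod_cast hn
  have hn0 : (0 : ℝ) < n := by linarith
  -- `m ≈ n √(δ / q)` balances the terms `q m / n` and `n δ / m`.
  set s := √(δ / q) with hs
  have hs0 : 0 < s := by positivity
  have hs1 : s ≤ 1 := Real.sqrt_le_one.2 ((div_le_one hq).2 hδq)
  have hqs : q * s = √(q * δ) := by
    rw [hs, ← Real.sqrt_sq hq.le, ← Real.sqrt_mul (sq_nonneg q), Real.sqrt_sq hq.le]
    congr 1
    field_simp
  have hδs : δ / s = q * s := by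
    rw [div_eq_iff hs0.ne', mul_assoc, Real.mul_self_sqrt (by positivity)]
    field_simp
  have hm : 0 < ⌈n * s⌉₊ := Nat.ceil_pos.2 (by positivity)
  refine ⟨⌈n * s⌉₊, hm, Nat.ceil_le.2 (mul_le_of_le_one_right hn0.le hs1), ?_⟩
  set m := ⌈n * s⌉₊
  have : (0 : ℝ) < m := by exact_mod_cast hm
  have hle : n * s ≤ m := Nat.le_ceil _
  have hge : (m : ℝ) ≤ n * s + 1 := (Nat.ceil_lt_add_one (by positivity)).le
  calc (2 * q * m ^ 2 / n + 2 * (n + 1) * δ) / m = 2 * q * m / n + 2 * (n + 1) * δ / m := by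
        field_simp
    _ ≤ 2 * q * (n * s + 1) / n + 2 * (n + n) * δ / (n * s) := by gcongr
    _ = 2 * (q * s) + 2 * q / n + 4 * (δ / s) := by
        field_simp
        ring
    _ = 6 * √(q * δ) + 2 * q / n := by
        rw [hδs, hqs]
        ring

lemma sum_capDiam_le_of_curvature {K : ℝ} (hK0 : 0 ≤ K)
    (hK : ∀ ξ ≠ 0, ∀ δ > 0, capDiam Ω ξ δ ≤ K * √(δ / ‖ξ‖)) (hne : Ω.Nonempty)
    (hout : Ω ⊆ Metric.closedBall 0 M) (hr : 0 < r) (hδ : 0 < δ) {ι : Type*} {s : Finset ι}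
    {ξ : ι → E2} (hξ : ∀ i ∈ s, r ≤ suppFn Ω (ξ i)) :
    ∑ i ∈ s, capDiam Ω (ξ i) δ ≤ s.card * (K * √(M * δ / r)) := by
  rw [← nsmul_eq_mul]
  refine Finset.sum_le_card_nsmul _ _ _ fun i hi => ?_
  have hrM : r ≤ M * ‖ξ i‖ := (hξ i hi).trans (suppFn_le_mul_norm hne hout _)
  have hξ0 : ξ i ≠ 0 := fun h => by
    rw [h, norm_zero, mul_zero] at hrM
    exact hr.not_ge hrM
  have : 0 < ‖ξ i‖ := norm_pos_iff.2 hξ0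
  refine (hK _ hξ0 _ hδ).trans ?_
  gcongr K * √?_
  rw [div_le_div_iff₀ (by positivity) hr, mul_right_comm M, mul_comm δ]
  gcongr

end Progressions

section Bounds

variable {r R h d : ℝ}

/-- The right-hand side `(Rr/(h²d²))^{1/4}` of the estimate for short segments. -/
def capBound (r R h d : ℝ) : ℝ := (R * r / (h ^ 2 * d ^ 2)) ^ ((1 : ℝ) / 4)

lemma capBound_nonneg (hr : 0 ≤ r) (hR : 0 ≤ R) (h d : ℝ) : 0 ≤ capBound r R h d := by
  unfold capBound
  positivity

lemma capBound_sq (hr : 0 ≤ r) (hR : 0 ≤ R) (hh : 0 ≤ h) (hd : 0 ≤ d) :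
    capBound r R h d ^ 2 = √(R * r) / (h * d) := by
  rw [capBound, ← Real.rpow_mul_natCast (by positivity), ← mul_pow,
    show (1 : ℝ) / 4 * (2 : ℕ) = 1 / 2 by norm_num, ← Real.sqrt_eq_rpow,
    Real.sqrt_div (by positivity), Real.sqrt_sq (by positivity)]

lemma one_le_capBound_mul (hr : 1 ≤ r) (hR : 1 ≤ R) (hh : 1 ≤ h) (hd : 1 ≤ d) :
    1 ≤ capBound r R h d * (h * d) := by
  have hA := capBound_nonneg (zero_le_one.trans hr) (zero_le_one.trans hR) h d
  rw [← one_le_sq_iff₀ (by positivity), mul_pow,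
    capBound_sq (by positivity) (by positivity) (by positivity) (by positivity)]
  calc (1 : ℝ) ≤ √(R * r) * (h * d) :=
        one_le_mul_of_one_le_of_one_le (Real.one_le_sqrt.2 (one_le_mul_of_one_le_of_one_le hR hr))
          (one_le_mul_of_one_le_of_one_le hh hd)
    _ = √(R * r) / (h * d) * (h * d) ^ 2 := by field_simp

lemma sqrt_div_le_capBound (hr : 0 < r) (hrR : r ≤ R) (hh : 0 < h) (hd : 1 ≤ d) :
    √(r / h) / d ≤ capBound r R h d := by
  have hR : 0 < R := hr.trans_le hrR
  have hrsqrt : r ≤ √(R * r) := Real.le_sqrt_of_sq_le (by nlinarith)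
  rw [← sq_le_sq₀ (by positivity) (capBound_nonneg hr.le hR.le h d), div_pow,
    Real.sq_sqrt (by positivity), capBound_sq hr.le hR.le hh.le (by positivity), div_div]
  gcongr
  exact le_self_pow₀ hd two_ne_zero

/-- The threshold `𝒯` for the number of lattice points of a segment, beyond which the estimate
for long segments is the weaker one. -/
def countThreshold (r R h d : ℝ) : ℝ :=
  R ^ ((3 : ℝ) / 4) * d ^ ((1 : ℝ) / 2) * h ^ (-(1 : ℝ) / 2) * r ^ (-(1 : ℝ) / 4)

lemma capBound_le_of_countThreshold_le {N : ℝ} (hr : 0 < r) (hR : 0 < R) (hh : 0 < h)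
    (hd : 0 < d) (hN : countThreshold r R h d ≤ N) :
    capBound r R h d ≤ (r * N / (h * d ^ 2)) ^ ((1 : ℝ) / 3) := by
  have hthreshold : (R * r / (h ^ 2 * d ^ 2)) ^ ((3 : ℝ) / 4) =
      r * countThreshold r R h d / (h * d ^ 2) := by
    unfold countThreshold
    rw [← Real.exp_log hr, ← Real.exp_log hR, ← Real.exp_log hh, ← Real.exp_log hd]
    simp only [← Real.exp_mul, ← Real.exp_add, ← Real.exp_sub, ← Real.exp_nat_mul]
    congr 1
    push_cast
    ring
  have : 0 ≤ countThreshold r R h d := by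
    unfold countThreshold
    positivity
  calc capBound r R h d = ((R * r / (h ^ 2 * d ^ 2)) ^ ((3 : ℝ) / 4)) ^ ((1 : ℝ) / 3) := by
        rw [capBound, ← Real.rpow_mul (by positivity)]
        norm_num
    _ ≤ (r * N / (h * d ^ 2)) ^ ((1 : ℝ) / 3) := by
        rw [hthreshold]
        gcongr

variable {Ω : Set E2} {ε M : ℝ} {p v : E2} {n : ℕ}

lemma sqrt_mul_sum_capDiam_le_of_long (hε : 0 < ε) (hin : Metric.closedBall 0 ε ⊆ Ω)
    (hout : Ω ⊆ Metric.closedBall 0 M) (hr : 2 ≤ r) (hrR : r ≤ R) (hh : 1 ≤ h) (hhR : h ≤ R)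
    (hv : 1 ≤ ‖v‖) (hn : 0 < n)
    (hline : ∀ t ∈ Icc (-n : ℝ) (2 * n), p + t • v ∈ supportAnnulus Ω r h)
    (hlong : 16 ≤ ε * (n * (h * ‖v‖))) (hAn : capBound r R h ‖v‖ ≤ n) :
    √(R * r) * ∑ j ∈ Finset.range (n + 1), capDiam Ω (p + (j : ℝ) • v) (1 / R) ≤
      128 * M / ε * capBound r R h ‖v‖ := by
  have hM : 0 ≤ M := by simpa using hout (hin (Metric.mem_closedBall_self hε.le))
  have hR : 0 < R := by linarith
  have hn0 : (0 : ℝ) < n := by exact_mod_cast hn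
  have hRh : 1 / R ≤ 1 / h := one_div_le_one_div_of_le (by linarith) hhR
  have hh1 : 1 / h ≤ 1 := div_le_one_of_le₀ hh (by positivity)
  obtain ⟨m, hm, hmn, hbalance⟩ := exists_nat_balance (by positivity) hRh hn
  have hlong' : 8 * (1 / h + 1 / R) ≤ ε * (n * ‖v‖) := calc
    8 * (1 / h + 1 / R) ≤ 16 / h := by rw [← mul_one_div 16 h]; linarith
    _ ≤ ε * (n * ‖v‖) := by rw [div_le_iff₀ (by positivity)]; linarith
  have hsum := sum_capDiam_le_of_long hε hin hout (by linarith) (by linarith) (by positivity)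
    (by linarith) (norm_pos_iff.1 (by linarith)) hline hlong' hm hmn
  have : 0 ≤ capBound r R h ‖v‖ := capBound_nonneg (by linarith) hR.le h ‖v‖
  have hA : capBound r R h ‖v‖ ^ 2 = √(R * r) / (h * ‖v‖) :=
    capBound_sq (by linarith) hR.le (by linarith) (by linarith)
  set A := capBound r R h ‖v‖
  have hsqrt : √(R * r) * √(1 / h * (1 / R)) = √(r / h) := by
    rw [← Real.sqrt_mul (by positivity)]
    congr 1
    field_simp
  calc √(R * r) * ∑ j ∈ Finset.range (n + 1), capDiam Ω (p + (j : ℝ) • v) (1 / R)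
      ≤ √(R * r) * (16 * M / ε * ((6 * √(1 / h * (1 / R)) + 2 * (1 / h) / n) / ‖v‖)) := by
        rw [← div_div] at hsum
        gcongr
        refine hsum.trans ?_
        gcongr
    _ = 16 * M / ε * (6 * (√(r / h) / ‖v‖) + 2 * (A ^ 2 / n)) := by
        rw [← hsqrt, hA]
        field_simp
    _ ≤ 16 * M / ε * (6 * A + 2 * A) := by
        gcongr
        · exact sqrt_div_le_capBound (by linarith) hrR (by linarith) hv
        · rw [div_le_iff₀ hn0, sq]
          gcongr
    _ = 128 * M / ε * A := by ring

lemma sqrt_mul_sum_capDiam_le_of_curvature {K : ℝ} (hK0 : 0 ≤ K)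
    (hK : ∀ ξ ≠ 0, ∀ δ > 0, capDiam Ω ξ δ ≤ K * √(δ / ‖ξ‖)) (hne : Ω.Nonempty)
    (hout : Ω ⊆ Metric.closedBall 0 M) (hr : 0 < r) (hR : 0 < R) {ι : Type*} {s : Finset ι}
    {ξ : ι → E2} (hξ : ∀ i ∈ s, r ≤ suppFn Ω (ξ i)) :
    √(R * r) * ∑ i ∈ s, capDiam Ω (ξ i) (1 / R) ≤ s.card * (K * √M) := by
  have hsum := sum_capDiam_le_of_curvature hK0 hK hne hout hr (one_div_pos.2 hR) hξ
  have hsqrt : √(R * r) * √(M * (1 / R) / r) = √M := by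
    rw [← Real.sqrt_mul (by positivity)]
    congr 1
    field_simp
  calc √(R * r) * ∑ i ∈ s, capDiam Ω (ξ i) (1 / R)
      ≤ √(R * r) * (s.card * (K * √(M * (1 / R) / r))) := by gcongr
    _ = s.card * (K * (√(R * r) * √(M * (1 / R) / r))) := by ring
    _ = s.card * (K * √M) := by rw [hsqrt]

theorem exists_sqrt_mul_sum_capDiam_le (hbdd : Bornology.IsBounded Ω) (h0 : 0 ∈ interior Ω)
    (hcurv : CurvBddBelow Ω) :
    ∃ C, 0 ≤ C ∧ ∀ r R h : ℝ, 2 ≤ r → r ≤ R → 1 ≤ h → h ≤ R → ∀ (p v : E2) (n : ℕ),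
      1 ≤ ‖v‖ → 0 < n → (∀ t ∈ Icc (-n : ℝ) (2 * n), p + t • v ∈ supportAnnulus Ω r h) →
      √(R * r) * ∑ j ∈ Finset.range (n + 1), capDiam Ω (p + (j : ℝ) • v) (1 / R) ≤
        C * capBound r R h ‖v‖ := by
  obtain ⟨K, hK0, hK⟩ := hcurv.exists_capDiam_le
  obtain ⟨ε, hε, hin⟩ := Metric.nhds_basis_closedBall.mem_iff.1 (mem_interior_iff_mem_nhds.1 h0)
  obtain ⟨M, hM, hout⟩ := hbdd.subset_closedBall_lt 0 0
  set c := 1 + 16 / ε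
  refine ⟨128 * M / ε + 2 * c * (K * √M), by positivity, ?_⟩
  intro r R h hr hrR hh hhR p v n hv hn hline
  have hA : 0 ≤ capBound r R h ‖v‖ := capBound_nonneg (by linarith) (by linarith) h ‖v‖
  set A := capBound r R h ‖v‖
  have hn1 : (1 : ℝ) ≤ n := by exact_mod_cast hn
  rcases le_total (n : ℝ) (c * A) with hfew | hmany
  · calc √(R * r) * ∑ j ∈ Finset.range (n + 1), capDiam Ω (p + (j : ℝ) • v) (1 / R)
        ≤ (Finset.range (n + 1)).card * (K * √M) :=
          sqrt_mul_sum_capDiam_le_of_curvature hK0 hK ⟨0, interior_subset h0⟩ hout (by linarith)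
            (by linarith) fun j hj => (hline j ⟨by linarith, by
              have : (j : ℝ) ≤ n := by exact_mod_cast Finset.mem_range_succ_iff.1 hj
              linarith⟩).1
      _ ≤ 2 * (c * A) * (K * √M) := by
          gcongr
          rw [Finset.card_range]
          push_cast
          linarith
      _ ≤ (128 * M / ε + 2 * c * (K * √M)) * A := by
          rw [add_mul]
          have : 0 ≤ 128 * M / ε * A := by positivity
          linarith
  · have hlong : 16 / ε ≤ n * (h * ‖v‖) := calc
      16 / ε ≤ c := le_add_of_nonneg_left zero_le_one
      _ ≤ c * (A * (h * ‖v‖)) := le_mul_of_one_le_right (by positivity)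
          (one_le_capBound_mul (by linarith) (by linarith) hh hv)
      _ ≤ n * (h * ‖v‖) := by
          rw [← mul_assoc]
          gcongr
    have hc : 1 ≤ c := le_add_of_nonneg_right (by positivity)
    calc √(R * r) * ∑ j ∈ Finset.range (n + 1), capDiam Ω (p + (j : ℝ) • v) (1 / R)
        ≤ 128 * M / ε * A :=
          sqrt_mul_sum_capDiam_le_of_long hε hin hout hr hrR hh hhR hv hn hline
            ((div_le_iff₀' hε).1 hlong) ((le_mul_of_one_le_left hA hc).trans hmany)
      _ ≤ (128 * M / ε + 2 * c * (K * √M)) * A := by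
          gcongr
          exact le_add_of_nonneg_right (by positivity)

end Bounds

section Lattice

variable {P Q g k : Fin 2 → ℤ} {n : ℕ}

lemma ek_apply (k : Fin 2 → ℤ) (i : Fin 2) : ek k i = k i := rfl

lemma ek_injective : Function.Injective ek := fun k l h => by
  ext i
  have hi : (k i : ℝ) = l i := congrArg (fun x : E2 => x i) h
  exact_mod_cast hi

lemma ek_add_nsmul (P g : Fin 2 → ℤ) (j : ℕ) : ek (P + j • g) = ek P + (j : ℝ) • ek g := by
  ext i
  simp [ek_apply]

lemma one_le_norm_ek (hk : k ≠ 0) : 1 ≤ ‖ek k‖ := by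
  obtain ⟨i, hi⟩ := Function.ne_iff.1 hk
  calc (1 : ℝ) ≤ |(k i : ℝ)| := by exact_mod_cast Int.one_le_abs hi
    _ ≤ ‖ek k‖ := PiLp.norm_apply_le (ek k) i

lemma ne_zero_of_isCoprime (hg : IsCoprime (g 0) (g 1)) : g ≠ 0 := by
  rintro rfl
  exact not_isCoprime_zero_zero hg

lemma exists_isCoprime_nsmul_eq (hk : k ≠ 0) :
    ∃ (g : Fin 2 → ℤ) (n : ℕ), 0 < n ∧ IsCoprime (g 0) (g 1) ∧ k = n • g := by
  have hgcd : 0 < Int.gcd (k 0) (k 1) := by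
    rw [Int.gcd_pos_iff]
    contrapose! hk
    ext i
    fin_cases i
    exacts [hk.1, hk.2]
  obtain ⟨n, a, b, hn, hab, h0, h1⟩ := Int.exists_gcd_one' hgcd
  refine ⟨![a, b], n, hn, Int.isCoprime_iff_gcd_eq_one.2 hab, ?_⟩
  ext i
  fin_cases i
  · simpa [mul_comm] using h0
  · simpa [mul_comm] using h1

lemma exists_int_cast_eq_of_smul_ek_eq (hg : IsCoprime (g 0) (g 1)) {c : ℝ}
    (h : c • ek g = ek k) : ∃ z : ℤ, (z : ℝ) = c := by
  obtain ⟨a, b, hab⟩ := hg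
  have hcoord (i : Fin 2) : c * g i = k i := congrArg (fun x : E2 => x i) h
  have hab' : (a : ℝ) * g 0 + b * g 1 = 1 := by exact_mod_cast hab
  -- Bézout: `c = c (a g₀ + b g₁) = a k₀ + b k₁`.
  refine ⟨a * k 0 + b * k 1, ?_⟩
  push_cast
  linear_combination c * hab' - a * hcoord 0 - b * hcoord 1

lemma add_nsmul_injective {G : Type*} [AddCommGroup G] [IsAddTorsionFree G] (a : G) {b : G}
    (hb : b ≠ 0) : Function.Injective fun n : ℕ => a + n • b := by
  have h := (add_right_injective a).comp ((smul_left_injective ℤ hb).comp Nat.cast_injective)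
  simpa only [natCast_zsmul, Function.comp_def] using h

/-- The lattice points `P, P + g, …, P + n g`. -/
def latticeProgression (P g : Fin 2 → ℤ) (n : ℕ) : Finset (Fin 2 → ℤ) :=
  (Finset.range (n + 1)).image fun j => P + j • g

lemma card_latticeProgression (hg : g ≠ 0) (P : Fin 2 → ℤ) (n : ℕ) :
    (latticeProgression P g n).card = n + 1 := by
  rw [latticeProgression, Finset.card_image_of_injective _ (add_nsmul_injective P hg),
    Finset.card_range]

lemma sum_latticeProgression (hg : g ≠ 0) (P : Fin 2 → ℤ) (n : ℕ) (F : E2 → ℝ) :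
    ∑ k ∈ latticeProgression P g n, F (ek k) =
      ∑ j ∈ Finset.range (n + 1), F (ek P + (j : ℝ) • ek g) := by
  simp only [latticeProgression, Finset.sum_image (add_nsmul_injective P hg).injOn, ek_add_nsmul]

lemma ek_mem_segment_iff (hg : IsCoprime (g 0) (g 1)) (hn : 0 < n) :
    ek k ∈ segment ℝ (ek P) (ek (P + n • g)) ↔ k ∈ latticeProgression P g n := by
  have hn' : (0 : ℝ) < n := by exact_mod_cast hn
  simp only [latticeProgression, Finset.mem_image, Finset.mem_range_succ_iff, segment_eq_image',
    ek_add_nsmul, add_sub_cancel_left, smul_smul]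
  constructor
  · rintro ⟨t, ⟨ht0, ht1⟩, ht⟩
    beta_reduce at ht
    have hsub : (t * n) • ek g = ek (k - P) := by
      rw [eq_sub_of_add_eq' ht]
      ext i
      simp [ek_apply]
    obtain ⟨z, hz⟩ := exists_int_cast_eq_of_smul_ek_eq hg hsub
    have hz0 : 0 ≤ z := by
      have : (0 : ℝ) ≤ z := by rw [hz]; positivity
      exact_mod_cast this
    lift z to ℕ using hz0
    rw [Int.cast_natCast] at hz
    refine ⟨z, ?_, ek_injective ?_⟩
    · have : (z : ℝ) ≤ n := hz ▸ mul_le_of_le_one_left hn'.le ht1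
      exact_mod_cast this
    · rw [ek_add_nsmul, hz, ht]
  · rintro ⟨j, hj, rfl⟩
    have hj' : (j : ℝ) ≤ n := by exact_mod_cast hj
    refine ⟨j / n, ⟨by positivity, div_le_one_of_le₀ hj' hn'.le⟩, ?_⟩
    beta_reduce
    rw [div_mul_cancel₀ _ hn'.ne', ek_add_nsmul]

lemma latticeCount_segment (hg : IsCoprime (g 0) (g 1)) (hn : 0 < n) (P : Fin 2 → ℤ) :
    latticeCount (segment ℝ (ek P) (ek (P + n • g))) = n + 1 := by
  simp only [latticeCount, ek_mem_segment_iff hg hn]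
  exact (Nat.card_eq_finsetCard _).trans
    (card_latticeProgression (ne_zero_of_isCoprime hg) P n)

/-- The distance between consecutive lattice points of the segment with lattice endpoints
`P ≠ Q`. -/
def latticeSpacing (P Q : Fin 2 → ℤ) : ℝ :=
  dist (ek P) (ek Q) / ((latticeCount (segment ℝ (ek P) (ek Q)) : ℝ) - 1)

lemma latticeSpacing_add_nsmul (hg : IsCoprime (g 0) (g 1)) (hn : 0 < n) (P : Fin 2 → ℤ) :
    latticeSpacing P (P + n • g) = ‖ek g‖ := by
  have hn' : (n : ℝ) ≠ 0 := by exact_mod_cast hn.ne'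
  rw [latticeSpacing, latticeCount_segment hg hn, ek_add_nsmul, dist_self_add_right, norm_smul,
    Real.norm_natCast, Nat.cast_succ, add_sub_cancel_right, mul_div_cancel_left₀ _ hn']

lemma exists_primitive_step (hPQ : P ≠ Q) :
    ∃ (g : Fin 2 → ℤ) (n : ℕ), 0 < n ∧ IsCoprime (g 0) (g 1) ∧ P + n • g = Q := by
  obtain ⟨g, n, hn, hg, h⟩ := exists_isCoprime_nsmul_eq (sub_ne_zero.2 hPQ.symm)
  exact ⟨g, n, hn, hg, by rw [← h, add_sub_cancel]⟩

lemma one_le_latticeSpacing (hPQ : P ≠ Q) : 1 ≤ latticeSpacing P Q := by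
  obtain ⟨g, n, hn, hg, rfl⟩ := exists_primitive_step hPQ
  rw [latticeSpacing_add_nsmul hg hn]
  exact one_le_norm_ek (ne_zero_of_isCoprime hg)

lemma tsum_ite_mem_segment (hg : IsCoprime (g 0) (g 1)) (hn : 0 < n) (P : Fin 2 → ℤ)
    (F : E2 → ℝ) :
    (∑' k : Fin 2 → ℤ, if ek k ∈ segment ℝ (ek P) (ek (P + n • g)) then F (ek k) else 0) =
      ∑ j ∈ Finset.range (n + 1), F (ek P + (j : ℝ) • ek g) := by
  rw [← sum_latticeProgression (ne_zero_of_isCoprime hg)]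
  simp only [ek_mem_segment_iff hg hn]
  rw [tsum_eq_sum (s := latticeProgression P g n) fun k hk => if_neg hk]
  exact Finset.sum_congr rfl fun k hk => if_pos hk

end Lattice

section Main

variable {Ω : Set E2}

/-- The sum `Σ_{ℓ∈𝕁} μ(ℓ/|ℓ|, 1/(R|ℓ|))` over the lattice points of the segment `J` from `P`
to `Q`. -/
def segmentCapSum (Ω : Set E2) (R : ℝ) (P Q : Fin 2 → ℤ) : ℝ :=
  ∑' k : Fin 2 → ℤ, if ek k ∈ segment ℝ (ek P) (ek Q) then
    capDiam Ω ((‖ek k‖)⁻¹ • ek k) (1 / (R * ‖ek k‖)) else 0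

lemma ne_zero_of_suppFn_pos {ξ : E2} (hξ : 0 < suppFn Ω ξ) : ξ ≠ 0 := by
  rintro rfl
  have h := suppFn_smul Ω (le_refl 0) (0 : E2)
  rw [zero_smul, zero_mul] at h
  exact hξ.ne' h

lemma image_lineMap_Icc_subset_ninefold {E : Type*} [AddCommGroup E] [Module ℝ E] (x y : E) :
    AffineMap.lineMap x y '' Icc (-1 : ℝ) 2 ⊆
      segment ℝ ((5 : ℝ) • x - (4 : ℝ) • y) ((5 : ℝ) • y - (4 : ℝ) • x) := by
  rintro _ ⟨t, ⟨ht1, ht2⟩, rfl⟩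
  refine ⟨(5 - t) / 9, (t + 4) / 9, by linarith, by linarith, by ring, ?_⟩
  rw [AffineMap.lineMap_apply_module]
  module

theorem exists_sqrt_mul_segmentCapSum_le (hbdd : Bornology.IsBounded Ω) (h0 : 0 ∈ interior Ω)
    (hcurv : CurvBddBelow Ω) :
    ∃ C, 0 ≤ C ∧ ∀ r R h : ℝ, 2 ≤ r → r ≤ R → 1 ≤ h → h ≤ R → ∀ P Q : Fin 2 → ℤ, P ≠ Q →
      AffineMap.lineMap (ek P) (ek Q) '' Icc (-1 : ℝ) 2 ⊆ supportAnnulus Ω r h →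
      √(R * r) * segmentCapSum Ω R P Q ≤ C * capBound r R h (latticeSpacing P Q) := by
  obtain ⟨C, hC, hsum⟩ := exists_sqrt_mul_sum_capDiam_le hbdd h0 hcurv
  refine ⟨C, hC, fun r R h hr hrR hh hhR P Q hPQ hJ => ?_⟩
  obtain ⟨g, n, hn, hg, rfl⟩ := exists_primitive_step hPQ
  have hn' : (0 : ℝ) < n := by exact_mod_cast hn
  have hline : ∀ t ∈ Icc (-n : ℝ) (2 * n), ek P + t • ek g ∈ supportAnnulus Ω r h := by
    refine fun t ht => hJ ⟨t / n, ⟨?_, ?_⟩, ?_⟩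
    · rw [le_div_iff₀ hn']
      linarith [ht.1]
    · exact (div_le_iff₀ hn').2 ht.2
    · rw [ek_add_nsmul, AffineMap.lineMap_apply, vsub_eq_sub, add_sub_cancel_left, vadd_eq_add,
        smul_smul, div_mul_cancel₀ _ hn'.ne', add_comm]
  rw [segmentCapSum, tsum_ite_mem_segment hg hn P fun ξ => capDiam Ω (‖ξ‖⁻¹ • ξ) (1 / (R * ‖ξ‖)),
    latticeSpacing_add_nsmul hg hn]
  convert hsum r R h hr hrR hh hhR (ek P) (ek g) n
    (one_le_norm_ek (ne_zero_of_isCoprime hg)) hn hline using 2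
  refine Finset.sum_congr rfl fun j hj => capDiam_normalize Ω (ne_zero_of_suppFn_pos (Ω := Ω) ?_) R
  have hj' : (j : ℝ) ≤ n := by exact_mod_cast Finset.mem_range_succ_iff.1 hj
  linarith [(hline j ⟨by linarith [j.cast_nonneg (α := ℝ)], by linarith⟩).1]

theorem statement11_general (hbdd : Bornology.IsBounded Ω) (h0 : 0 ∈ interior Ω)
    (hcurv : CurvBddBelow Ω) :
    ∃ C, ∀ r R h : ℝ, 2 ≤ r → r ≤ R → 1 ≤ h → h ≤ R → ∀ P Q : Fin 2 → ℤ, P ≠ Q →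
      AffineMap.lineMap (ek P) (ek Q) '' Icc (-1 : ℝ) 2 ⊆ supportAnnulus Ω r h →
      √(R * r) * segmentCapSum Ω R P Q ≤ C * capBound r R h (latticeSpacing P Q) ∧
      (countThreshold r R h (latticeSpacing P Q) ≤ latticeCount (segment ℝ (ek P) (ek Q)) →
        √(R * r) * segmentCapSum Ω R P Q ≤
          C * (r * latticeCount (segment ℝ (ek P) (ek Q)) / (h * latticeSpacing P Q ^ 2)) ^
            ((1 : ℝ) / 3)) := by
  obtain ⟨C, hC, hsum⟩ := exists_sqrt_mul_segmentCapSum_le hbdd h0 hcurv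
  refine ⟨C, fun r R h hr hrR hh hhR P Q hPQ hJ => ?_⟩
  have hbound := hsum r R h hr hrR hh hhR P Q hPQ hJ
  have hd : 0 < latticeSpacing P Q := zero_lt_one.trans_le (one_le_latticeSpacing hPQ)
  refine ⟨hbound, fun hcount => hbound.trans ?_⟩
  gcongr
  exact capBound_le_of_countThreshold_le (by linarith) (by linarith) (by linarith) hd hcount

end Main

/-- Lemma 6.1: let `Ω` be a bounded open convex planar domain containing
the origin with curvature bounded below in the generalized sense. Let `10 ≤ r ≤ R`,
`√R ≤ h ≤ R`, and let `J` be a closed segment with endpoints `P ≠ Q` in `ℤ²` whose ninefold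
concentric dilate `9J` (the segment from `5P−4Q` to `5Q−4P`) lies in the annulus
`𝒜(r,h) = {r ≤ ρ* ≤ r + 1/h}`, containing at least `10` lattice points.  With
`d = |J|/(card 𝕁 − 1)` the spacing of lattice points on `J` and
`𝒯 = R^{3/4} d^{1/2} h^{−1/2} r^{−1/4}`, one has
`√(Rr) Σ_{ℓ∈𝕁} μ(ℓ/|ℓ|, 1/(R|ℓ|)) ≤ C_Ω (Rr/(h²d²))^{1/4}` if `card 𝕁 ≤ 𝒯` and
`≤ C_Ω (r·card 𝕁/(hd²))^{1/3}` if `card 𝕁 ≥ 𝒯`. -/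
theorem statement11 (Ω : Set E2) (hconv : Convex ℝ Ω) (hopen : IsOpen Ω)
    (hbdd : Bornology.IsBounded Ω) (h0 : (0 : E2) ∈ Ω) (hcurv : CurvBddBelow Ω) :
    ∃ C : ℝ, ∀ r R h : ℝ, 10 ≤ r → r ≤ R → Real.sqrt R ≤ h → h ≤ R →
      ∀ P Q : Fin 2 → ℤ, P ≠ Q →
      segment ℝ ((5 : ℝ) • ek P - (4 : ℝ) • ek Q) ((5 : ℝ) • ek Q - (4 : ℝ) • ek P) ⊆
        {x : E2 | r ≤ suppFn Ω x ∧ suppFn Ω x ≤ r + 1 / h} →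
      ∀ NJ : ℕ, NJ = Nat.card {k : Fin 2 → ℤ | ek k ∈ segment ℝ (ek P) (ek Q)} →
      10 ≤ NJ →
      ∀ d : ℝ, d = dist (ek P) (ek Q) / ((NJ : ℝ) - 1) →
      (((NJ : ℝ) ≤ R ^ ((3 : ℝ) / 4) * d ^ ((1 : ℝ) / 2) * h ^ (-(1 : ℝ) / 2) *
            r ^ (-(1 : ℝ) / 4) →
          Real.sqrt (R * r) *
              (∑' k : Fin 2 → ℤ, if ek k ∈ segment ℝ (ek P) (ek Q) then
                capDiam Ω ((‖ek k‖)⁻¹ • ek k) (1 / (R * ‖ek k‖)) else 0) ≤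
            C * (R * r / (h ^ 2 * d ^ 2)) ^ ((1 : ℝ) / 4)) ∧
        (R ^ ((3 : ℝ) / 4) * d ^ ((1 : ℝ) / 2) * h ^ (-(1 : ℝ) / 2) * r ^ (-(1 : ℝ) / 4) ≤
            (NJ : ℝ) →
          Real.sqrt (R * r) *
              (∑' k : Fin 2 → ℤ, if ek k ∈ segment ℝ (ek P) (ek Q) then
                capDiam Ω ((‖ek k‖)⁻¹ • ek k) (1 / (R * ‖ek k‖)) else 0) ≤
            C * (r * (NJ : ℝ) / (h * d ^ 2)) ^ ((1 : ℝ) / 3))) := by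
  obtain ⟨C, hC⟩ := statement11_general hbdd (hopen.interior_eq.symm ▸ h0) hcurv
  refine ⟨C, ?_⟩
  rintro r R h hr hrR hRh hhR P Q hPQ hJ _ rfl - _ rfl
  have hh : 1 ≤ h := (Real.one_le_sqrt.2 (by linarith)).trans hRh
  exact (hC r R h (by linarith) hrR hh hhR P Q hPQ
    ((image_lineMap_Icc_subset_ninefold _ _).trans hJ)).imp_left fun hbound _ => hbound

end
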